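/- Control of u_t by spatial norms: Let (σ, u, β) be a sufficiently regular solution of the scaled perturbed Navier–Stokes–Korteweg system on Ω × (0,T) satisfying the Navier boundary conditions and the density lower bound ρ(t,x) ≥ d > 0 on Ω × (0,T), where ρ = ρ̄ + κ⁻¹σ. Then for all t ∈ (0,T): ‖u_t‖₀ ≲ κ‖(Δ_hσ, ∇_h∂₃σ)‖₀ + (1 + (1 + κ⁻¹‖σ‖₂)‖u‖₁)‖u‖₂ + ‖∇σ‖₁‖∇σ‖₂. -/

import Mathlib

open MeasureTheory Set Filter Topology
open scoped ENNReal

noncomputable section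

abbrev R3 : Type := Fin 3 → ℝ

/-- The slab Ω = ℝ² × (0, h). -/
def slab (hh : ℝ) : Set R3 := {x | x 2 ∈ Set.Ioo 0 hh}

/-- The boundary ∂Ω = ℝ² × {0, h}. -/
def bdry (hh : ℝ) : Set R3 := {x | x 2 = 0 ∨ x 2 = hh}

/-- `i`-th standard basis vector of ℝ³. -/
def unitv (i : Fin 3) : R3 := fun j => if j = i then 1 else 0

/-- spatial partial derivative ∂ᵢ -/
def pd (i : Fin 3) (f : R3 → ℝ) : R3 → ℝ := fun x => fderiv ℝ f x (unitv i)

/-- iterated spatial partial derivatives -/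
def pdL : List (Fin 3) → (R3 → ℝ) → R3 → ℝ
  | [], f => f
  | i :: l, f => pd i (pdL l f)

/-- Laplacian -/
def lap (f : R3 → ℝ) : R3 → ℝ := fun x => ∑ i : Fin 3, pd i (pd i f) x

/-- horizontal Laplacian Δ_h -/
def laph (f : R3 → ℝ) : R3 → ℝ := fun x => pd 0 (pd 0 f) x + pd 1 (pd 1 f) x

/-- time derivative -/
def dt (f : ℝ → R3 → ℝ) : ℝ → R3 → ℝ := fun t x => deriv (fun s => f s x) t

/-- `j`-th component of a time dependent vector field -/
def uc (u : ℝ → R3 → Fin 3 → ℝ) (j : Fin 3) : ℝ → R3 → ℝ := fun t x => u t x j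

/-- squared L²(Ω) norm -/
def L2sq (hh : ℝ) (f : R3 → ℝ) : ℝ := ∫ x in slab hh, (f x) ^ 2

/-- squared Hᵏ(Ω) norm -/
def HSq (hh : ℝ) (k : ℕ) (f : R3 → ℝ) : ℝ :=
  ∑ n ∈ Finset.range (k + 1), ∑ α : Fin n → Fin 3, L2sq hh (pdL (List.ofFn α) f)

/-- Hᵏ(Ω) norm -/
def Hnorm (hh : ℝ) (k : ℕ) (f : R3 → ℝ) : ℝ := Real.sqrt (HSq hh k f)

/-- squared Hᵏ(Ω) norm of a vector field -/
def VHSq (hh : ℝ) (k : ℕ) (w : R3 → Fin 3 → ℝ) : ℝ := ∑ j : Fin 3, HSq hh k (fun x => w x j)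

def VHnorm (hh : ℝ) (k : ℕ) (w : R3 → Fin 3 → ℝ) : ℝ := Real.sqrt (VHSq hh k w)

/-- squared ‖∇w‖ₖ² -/
def GradSq (hh : ℝ) (k : ℕ) (w : R3 → Fin 3 → ℝ) : ℝ :=
  ∑ i : Fin 3, ∑ j : Fin 3, HSq hh k (pd i (fun x => w x j))

def GradNorm (hh : ℝ) (k : ℕ) (w : R3 → Fin 3 → ℝ) : ℝ := Real.sqrt (GradSq hh k w)

/-- iterate of a single partial derivative -/
def pdIter (i : Fin 3) : ℕ → (R3 → ℝ) → R3 → ℝ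
  | 0, f => f
  | n + 1, f => pd i (pdIter i n f)

/-- anisotropic norm ‖f‖_{i,l} = ∑_{α₁+α₂=i} ‖∂₁^{α₁}∂₂^{α₂} f‖_{H^l} -/
def anisoNorm (hh : ℝ) (i l : ℕ) (f : R3 → ℝ) : ℝ :=
  ∑ a ∈ Finset.range (i + 1), Hnorm hh l (pdIter 0 a (pdIter 1 (i - a) f))

/-- equilibrium density ρ̄(x) = x₃ + 1 -/
def rbar : R3 → ℝ := fun x => x 2 + 1

/-- perturbed density ρ = ρ̄ + κ⁻¹ σ -/
def rho (κ : ℝ) (σ : R3 → ℝ) : R3 → ℝ := fun x => rbar x + κ⁻¹ * σ x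

/-- The scaled perturbed incompressible NSK system at time `t` on the slab:
    σ_t + u·∇σ + κu₃ = 0,  ρ(u_t + u·∇u) + ∇β = μΔu − Δσ(κe³ + ∇σ),  div u = 0. -/
def NSK (hh μ κ : ℝ) (σ : ℝ → R3 → ℝ) (u : ℝ → R3 → Fin 3 → ℝ) (β : ℝ → R3 → ℝ)
    (t : ℝ) : Prop :=
  ∀ x ∈ slab hh,
    (dt σ t x + (∑ i : Fin 3, u t x i * pd i (σ t) x) + κ * u t x 2 = 0) ∧
    (∀ j : Fin 3,
      rho κ (σ t) x *
          (dt (uc u j) t x + ∑ i : Fin 3, u t x i * pd i (fun y => u t y j) x)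
        + pd j (β t) x
      = μ * lap (fun y => u t y j) x
        - lap (σ t) x * ((if j = 2 then κ else 0) + pd j (σ t) x)) ∧
    (∑ i : Fin 3, pd i (fun y => u t y i) x = 0)

/-- Navier(-slip) boundary conditions at time `t`. -/
def NavierBC (hh : ℝ) (u : ℝ → R3 → Fin 3 → ℝ) (t : ℝ) : Prop :=
  ∀ x ∈ bdry hh,
    u t x 2 = 0 ∧ pd 2 (fun y => u t y 0) x = 0 ∧ pd 2 (fun y => u t y 1) x = 0

/-- "sufficiently regular" time dependent scalar field: jointly smooth with all
    spatial derivatives (and their time derivatives) square integrable on the slab. -/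
def SReg (hh : ℝ) (f : ℝ → R3 → ℝ) : Prop :=
  ContDiff ℝ (⊤ : ℕ∞) (Function.uncurry f) ∧
  ∀ (t : ℝ) (l : List (Fin 3)),
    IntegrableOn (fun x => (pdL l (f t) x) ^ 2) (slab hh) volume ∧
    IntegrableOn (fun x => (pdL l (dt f t) x) ^ 2) (slab hh) volume

/-- "sufficiently regular" time dependent vector field -/
def VReg (hh : ℝ) (u : ℝ → R3 → Fin 3 → ℝ) : Prop := ∀ j : Fin 3, SReg hh (uc u j)

/-- regular (time independent) data with square integrable derivatives -/
def DReg (hh : ℝ) (f : R3 → ℝ) : Prop :=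
  ContDiff ℝ (⊤ : ℕ∞) f ∧ ∀ l : List (Fin 3), IntegrableOn (fun x => (pdL l f x) ^ 2) (slab hh) volume

/-- boundary conditions defining H³_ρ̄ (note ρ̄' = 1) -/
def BCh3 (hh κ : ℝ) (f : R3 → ℝ) : Prop :=
  ∀ x ∈ bdry hh, f x = 0 ∧ pd 2 (pd 2 f) x = 0 ∧ pd 2 f x = -κ

/-- divergence-free and boundary conditions defining ℋ²ₛ -/
def BCh2s (hh : ℝ) (w : R3 → Fin 3 → ℝ) : Prop :=
  (∀ x ∈ slab hh, ∑ i : Fin 3, pd i (fun y => w y i) x = 0) ∧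
  (∀ x ∈ bdry hh, w x 2 = 0 ∧ pd 2 (fun y => w y 0) x = 0 ∧ pd 2 (fun y => w y 1) x = 0)

/-- continuity in time with values in Hᵏ(Ω) -/
def ContH (hh : ℝ) (k : ℕ) (S : Set ℝ) (f : ℝ → R3 → ℝ) : Prop :=
  ∀ t₀ ∈ S,
    Tendsto (fun t => Hnorm hh k (fun x => f t x - f t₀ x)) (nhdsWithin t₀ S) (𝓝 0)

/-- membership in L²(0,T;Hᵏ) -/
def L2H (hh : ℝ) (k : ℕ) (T : ℝ) (f : ℝ → R3 → ℝ) : Prop :=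
  IntegrableOn (fun t => HSq hh k (f t)) (Set.Ioo 0 T) volume

/-- membership in 𝔓_T -/
def memP (hh κ T : ℝ) (σ : ℝ → R3 → ℝ) : Prop :=
  (∀ t ∈ Set.Icc (0:ℝ) T,
    (∀ l : List (Fin 3), l.length ≤ 3 →
      IntegrableOn (fun x => (pdL l (σ t) x) ^ 2) (slab hh) volume) ∧
    BCh3 hh κ (σ t)) ∧
  ContH hh 3 (Set.Icc 0 T) σ ∧ ContH hh 1 (Set.Icc 0 T) (dt σ) ∧ L2H hh 2 T (dt σ)

/-- membership in 𝒱_T -/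
def memV (hh T : ℝ) (u : ℝ → R3 → Fin 3 → ℝ) : Prop :=
  (∀ t ∈ Set.Icc (0:ℝ) T,
    (∀ (j : Fin 3) (l : List (Fin 3)), l.length ≤ 3 →
      IntegrableOn (fun x => (pdL l (fun y => u t y j) x) ^ 2) (slab hh) volume) ∧
    BCh2s hh (u t)) ∧
  (∀ j : Fin 3, ContH hh 2 (Set.Icc 0 T) (uc u j)) ∧
  (∀ j : Fin 3, L2H hh 3 T (uc u j)) ∧
  (∀ j : Fin 3, ContH hh 0 (Set.Icc 0 T) (dt (uc u j))) ∧
  (∀ j : Fin 3, L2H hh 1 T (dt (uc u j)))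

/-- the energy functional E(t) -/
def Efun (hh κ : ℝ) (σ : ℝ → R3 → ℝ) (u : ℝ → R3 → Fin 3 → ℝ) (t : ℝ) : ℝ :=
  HSq hh 3 (σ t) + VHSq hh 2 (u t) + κ ^ 2 * HSq hh 1 (fun x => u t x 2)
    + κ ^ 2 * (L2sq hh (laph (σ t)) + L2sq hh (pd 0 (pd 2 (σ t)))
        + L2sq hh (pd 1 (pd 2 (σ t))))

/-- E⁰, the energy functional evaluated on initial data -/
def E0fun (hh κ : ℝ) (σ0 : R3 → ℝ) (u0 : R3 → Fin 3 → ℝ) : ℝ :=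
  HSq hh 3 σ0 + VHSq hh 2 u0 + κ ^ 2 * HSq hh 1 (fun x => u0 x 2)
    + κ ^ 2 * (L2sq hh (laph σ0) + L2sq hh (pd 0 (pd 2 σ0)) + L2sq hh (pd 1 (pd 2 σ0)))

/-- the functional ℰ(t) -/
def EE (hh κ : ℝ) (σ : ℝ → R3 → ℝ) (u : ℝ → R3 → Fin 3 → ℝ) (t : ℝ) : ℝ :=
  HSq hh 1 (dt σ t) + (∑ j : Fin 3, L2sq hh (dt (uc u j) t)) + Efun hh κ σ u t

/-- the dissipation functional 𝒟(t) -/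
def DD (hh : ℝ) (σ : ℝ → R3 → ℝ) (u : ℝ → R3 → Fin 3 → ℝ) (t : ℝ) : ℝ :=
  (anisoNorm hh 1 2 (σ t)) ^ 2 + HSq hh 2 (dt σ t) + GradSq hh 2 (u t)
    + ∑ j : Fin 3, HSq hh 1 (dt (uc u j) t)

/-- ‖u_t‖ₖ -/
def utNorm (hh : ℝ) (k : ℕ) (u : ℝ → R3 → Fin 3 → ℝ) (t : ℝ) : ℝ :=
  Real.sqrt (∑ j : Fin 3, HSq hh k (dt (uc u j) t))

/-- embedding of the horizontal indices into Fin 3 -/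
def hi (a : Fin 2) : Fin 3 := ⟨a.1, by omega⟩

/-- good initial data: (σ⁰,u⁰) ∈ H³_ρ̄ × ℋ²ₛ, no vacuum, and smallness of E⁰ -/
def GoodData (hh κ d c₁ c₂ : ℝ) (σ0 : R3 → ℝ) (u0 : R3 → Fin 3 → ℝ) : Prop :=
  DReg hh σ0 ∧ (∀ j : Fin 3, DReg hh (fun x => u0 x j)) ∧
  BCh3 hh κ σ0 ∧ BCh2s hh u0 ∧
  (∀ x ∈ slab hh, d ≤ rbar x + κ⁻¹ * σ0 x) ∧
  E0fun hh κ σ0 u0 ≤ ((3 * c₁ * (max κ⁻¹ c₂) ^ 9)⁻¹) ^ 3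

/-- (σ,u,∇β) is a global strong solution with data (σ⁰,u⁰):
    initial condition, equations and boundary conditions for positive times, and
    (σ,u,∇β) ∈ 𝔓_T × 𝒱_T × C⁰([0,T],L²) for every T > 0. -/
def GlobalSol (hh μ κ : ℝ) (σ0 : R3 → ℝ) (u0 : R3 → Fin 3 → ℝ)
    (σ : ℝ → R3 → ℝ) (u : ℝ → R3 → Fin 3 → ℝ) (β : ℝ → R3 → ℝ) : Prop :=
  (∀ x ∈ slab hh, σ 0 x = σ0 x ∧ ∀ j : Fin 3, u 0 x j = u0 x j) ∧
  (∀ t : ℝ, 0 < t → NSK hh μ κ σ u β t ∧ NavierBC hh u t) ∧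
  (∀ T : ℝ, 0 < T → memP hh κ T σ ∧ memV hh T u ∧
    ∀ j : Fin 3, ContH hh 0 (Set.Icc 0 T) (fun t => pd j (β t)))

end


section Helpers

lemma pd_smooth {f : R3 → ℝ} (hf : ContDiff ℝ (⊤ : ℕ∞) f) (i : Fin 3) :
    ContDiff ℝ (⊤ : ℕ∞) (pd i f) := by
  unfold pd
  exact (hf.fderiv_right (m := ((⊤ : ℕ∞) : WithTop ℕ∞)) (by simp)).clm_apply contDiff_const

lemma pdL_smooth {f : R3 → ℝ} (hf : ContDiff ℝ (⊤ : ℕ∞) f) (l : List (Fin 3)) :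
    ContDiff ℝ (⊤ : ℕ∞) (pdL l f) := by
  induction l with
  | nil => exact hf
  | cons i l ih => exact pd_smooth ih i

lemma unitv_eq (i : Fin 3) : unitv i = Pi.single i 1 := by
  ext j; simp [unitv, Pi.single_apply]

lemma fderiv_apply_eq (f : R3 → ℝ) (x v : R3) :
    fderiv ℝ f x v = ∑ i, v i * pd i f x := by
  have hv : v = ∑ i, v i • unitv i := by
    ext j; simp [unitv, Finset.sum_apply]
  conv_lhs => rw [hv]
  simp [map_sum, pd]

lemma slab_meas (hh : ℝ) : MeasurableSet (slab hh) :=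
  measurableSet_Ioo.preimage (measurable_pi_apply 2)

lemma L2sq_nonneg (hh : ℝ) (f : R3 → ℝ) : 0 ≤ L2sq hh f :=
  integral_nonneg fun _ => sq_nonneg _

lemma L2sq_pdL_le (hh : ℝ) (k : ℕ) (f : R3 → ℝ) (l : List (Fin 3)) (hl : l.length ≤ k) :
    L2sq hh (pdL l f) ≤ HSq hh k f := by
  unfold HSq
  have h1 : L2sq hh (pdL l f) ≤ ∑ α : Fin l.length → Fin 3, L2sq hh (pdL (List.ofFn α) f) := by
    have := Finset.single_le_sum (f := fun α : Fin l.length → Fin 3 =>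
      L2sq hh (pdL (List.ofFn α) f)) (fun _ _ => L2sq_nonneg _ _) (Finset.mem_univ l.get)
    simpa using this
  refine h1.trans ?_
  exact Finset.single_le_sum (f := fun n => ∑ α : Fin n → Fin 3, L2sq hh (pdL (List.ofFn α) f))
    (fun _ _ => Finset.sum_nonneg fun _ _ => L2sq_nonneg _ _)
    (Finset.mem_range.2 (by omega))

lemma HSq_nonneg (hh : ℝ) (k : ℕ) (f : R3 → ℝ) : 0 ≤ HSq hh k f :=
  Finset.sum_nonneg fun _ _ => Finset.sum_nonneg fun _ _ => L2sq_nonneg _ _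

lemma HSq_zero (hh : ℝ) (f : R3 → ℝ) : HSq hh 0 f = L2sq hh f := by
  simp [HSq, pdL]

/-- second-order energy density -/
noncomputable def GG (f : R3 → ℝ) : R3 → ℝ := fun x =>
  f x ^ 2 + ∑ i, pd i f x ^ 2 + ∑ i, ∑ j, pd i (pd j f) x ^ 2

lemma GG_nonneg (f : R3 → ℝ) (x : R3) : 0 ≤ GG f x := by
  unfold GG; positivity

lemma GG_cont {f : R3 → ℝ} (hf : ContDiff ℝ (⊤ : ℕ∞) f) : Continuous (GG f) := by
  have h0 := hf.continuous
  have h1 := fun i => (pd_smooth hf i).continuous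
  have h2 := fun i j => (pd_smooth (pd_smooth hf j) i).continuous
  unfold GG
  fun_prop

lemma GG_int {hh : ℝ} {f : R3 → ℝ} 
    (hI : ∀ l : List (Fin 3), IntegrableOn (fun x => (pdL l f x) ^ 2) (slab hh) volume) :
    IntegrableOn (GG f) (slab hh) ∧ ∫ x in slab hh, GG f x ≤ 13 * HSq hh 2 f := by
  have i0 : IntegrableOn (fun x => f x ^ 2) (slab hh) := hI []
  have i1 : ∀ i, IntegrableOn (fun x => pd i f x ^ 2) (slab hh) := fun i => hI [i]
  have i2 : ∀ i j, IntegrableOn (fun x => pd i (pd j f) x ^ 2) (slab hh) := fun i j => hI [i, j]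
  have j1 : IntegrableOn (fun x => ∑ i, pd i f x ^ 2) (slab hh) :=
    integrable_finsetSum _ fun i _ => i1 i
  have j2' : ∀ i, IntegrableOn (fun x => ∑ j, pd i (pd j f) x ^ 2) (slab hh) := fun i =>
    integrable_finsetSum _ fun j _ => i2 i j
  have j2 : IntegrableOn (fun x => ∑ i, ∑ j, pd i (pd j f) x ^ 2) (slab hh) :=
    integrable_finsetSum _ fun i _ => j2' i
  have i01 : IntegrableOn (fun x => f x ^ 2 + ∑ i, pd i f x ^ 2) (slab hh) := i0.add j1
  refine ⟨i01.add j2, ?_⟩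
  unfold GG
  rw [integral_add i01 j2, integral_add i0 j1, integral_finsetSum _ (fun i _ => i1 i),
    integral_finsetSum _ (fun i _ => j2' i)]
  have e : ∀ i, ∫ x in slab hh, ∑ j, pd i (pd j f) x ^ 2
      = ∑ j, ∫ x in slab hh, pd i (pd j f) x ^ 2 := fun i =>
    integral_finsetSum _ (fun j _ => i2 i j)
  simp only [e]
  have b0 : ∫ x in slab hh, f x ^ 2 ≤ HSq hh 2 f := L2sq_pdL_le hh 2 f [] (by simp)
  have b1 : ∀ i, ∫ x in slab hh, pd i f x ^ 2 ≤ HSq hh 2 f :=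
    fun i => L2sq_pdL_le hh 2 f [i] (by simp)
  have b2 : ∀ i j, ∫ x in slab hh, pd i (pd j f) x ^ 2 ≤ HSq hh 2 f :=
    fun i j => L2sq_pdL_le hh 2 f [i, j] (by simp)
  have s1 := Finset.sum_le_sum (s := Finset.univ) fun i _ => b1 i
  have s2 := Finset.sum_le_sum (s := Finset.univ) fun i _ =>
    Finset.sum_le_sum (s := Finset.univ) fun j _ => b2 i j
  simp at s1 s2
  linarith

/-- second derivative of the cut-off function along a line -/
noncomputable def gdd (f : R3 → ℝ) (x v : R3) (s : ℝ) : ℝ :=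
  2 * f (x + s • v) - 4 * (1 - s) * (∑ i, v i * pd i f (x + s • v))
    + (1 - s) ^ 2 * ∑ i, v i * ∑ j, v j * pd j (pd i f) (x + s • v)

lemma line_deriv {f : R3 → ℝ} (hf : ContDiff ℝ (⊤ : ℕ∞) f) (x v : R3) (s : ℝ) :
    HasDerivAt (fun s : ℝ => f (x + s • v)) (∑ i, v i * pd i f (x + s • v)) s := by
  have h1 : HasDerivAt (fun s : ℝ => x + s • v) v s := by
    simpa using ((hasDerivAt_id s).smul_const v).const_add x
  have h2 := ((hf.differentiable (by simp)) (x + s • v)).hasFDerivAt.comp_hasDerivAt s h1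
  rwa [fderiv_apply_eq] at h2

lemma gdd_cont {f : R3 → ℝ} (hf : ContDiff ℝ (⊤ : ℕ∞) f) (x v : R3) :
    Continuous (gdd f x v) := by
  have h0 := hf.continuous
  have h1 := fun i => (pd_smooth hf i).continuous
  have h2 := fun i j => (pd_smooth (pd_smooth hf j) i).continuous
  unfold gdd
  fun_prop

lemma line_repr {f : R3 → ℝ} (hf : ContDiff ℝ (⊤ : ℕ∞) f) (x v : R3) :
    f x = ∫ s in (0:ℝ)..1, s * gdd f x v s := by
  -- primitive: s * g' - g
  have key : ∀ s ∈ Set.uIcc (0:ℝ) 1, HasDerivAt (fun s : ℝ =>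
      s * (-2 * (1 - s) * f (x + s • v) + (1 - s) ^ 2 * ∑ i, v i * pd i f (x + s • v))
        - (1 - s) ^ 2 * f (x + s • v)) (s * gdd f x v s) s := by
    intro s _
    have h0 := line_deriv hf x v s
    have h1 : HasDerivAt (fun s : ℝ => ∑ i, v i * pd i f (x + s • v))
        (∑ i, v i * ∑ j, v j * pd j (pd i f) (x + s • v)) s :=
      HasDerivAt.fun_sum fun i _ => (line_deriv (pd_smooth hf i) x v s).const_mul (v i)
    have hs : HasDerivAt (fun s : ℝ => 1 - s) (-1) s := by
      simpa using (hasDerivAt_id s).const_sub 1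
    have hg := (((hs.const_mul (-2)).mul h0).add ((hs.pow 2).mul h1))
    have := ((hasDerivAt_id s).mul hg).sub ((hs.pow 2).mul h0)
    refine this.congr_deriv ?_
    simp only [gdd, Pi.mul_apply, Pi.add_apply, Pi.pow_apply, id]
    push_cast
    ring
  rw [intervalIntegral.integral_eq_sub_of_hasDerivAt key
    ((continuous_id.mul (gdd_cont hf x v)).intervalIntegrable _ _)]
  simp

lemma gdd_bound (f : R3 → ℝ) (x v : R3) (hv : ∀ i, |v i| ≤ 1) (s : ℝ) (hs : s ∈ Set.Icc (0:ℝ) 1) :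
    gdd f x v s ^ 2 ≤ 208 * GG f (x + s • v) := by
  set y := x + s • v
  have hsa : |1 - s| ≤ 1 := by rw [abs_le]; constructor <;> linarith [hs.1, hs.2]
  have A : |gdd f x v s| ≤ 4 * (|f y| + ∑ i, |pd i f y| + ∑ i, ∑ j, |pd i (pd j f) y|) := by
    have a1 : |∑ i, v i * pd i f y| ≤ ∑ i, |pd i f y| := by
      refine (Finset.abs_sum_le_sum_abs _ _).trans (Finset.sum_le_sum fun i _ => ?_)
      rw [abs_mul]; exact mul_le_of_le_one_left (abs_nonneg _) (hv i)
    have a2 : |∑ i, v i * ∑ j, v j * pd j (pd i f) y| ≤ ∑ i, ∑ j, |pd i (pd j f) y| := by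
      rw [Finset.sum_comm]
      refine (Finset.abs_sum_le_sum_abs _ _).trans (Finset.sum_le_sum fun i _ => ?_)
      rw [abs_mul]
      refine (mul_le_of_le_one_left (abs_nonneg _) (hv i)).trans ?_
      refine (Finset.abs_sum_le_sum_abs _ _).trans (Finset.sum_le_sum fun j _ => ?_)
      rw [abs_mul]; exact mul_le_of_le_one_left (abs_nonneg _) (hv j)
    have b1 : |4 * (1 - s) * ∑ i, v i * pd i f y| ≤ 4 * ∑ i, |pd i f y| := by
      rw [abs_mul, abs_mul, abs_of_pos (by norm_num : (0:ℝ) < 4)]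
      have := mul_le_mul hsa a1 (abs_nonneg _) zero_le_one
      linarith
    have b2 : |(1 - s) ^ 2 * ∑ i, v i * ∑ j, v j * pd j (pd i f) y| ≤
        ∑ i, ∑ j, |pd i (pd j f) y| := by
      rw [abs_mul, abs_pow]
      refine (mul_le_of_le_one_left (abs_nonneg _) (pow_le_one₀ (abs_nonneg _) hsa)).trans a2
    have b0 : |2 * f y| = 2 * |f y| := by rw [abs_mul]; norm_num
    have p2 : 0 ≤ ∑ i, ∑ j, |pd i (pd j f) y| := by positivity
    have := abs_add_le (2 * f y - 4 * (1 - s) * ∑ i, v i * pd i f y)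
      ((1 - s) ^ 2 * ∑ i, v i * ∑ j, v j * pd j (pd i f) y)
    have t2 := abs_sub (2 * f y) (4 * (1 - s) * ∑ i, v i * pd i f y)
    unfold gdd
    linarith [abs_nonneg (f y)]
  have B : (|f y| + ∑ i, |pd i f y| + ∑ i, ∑ j, |pd i (pd j f) y|) ^ 2 ≤ 13 * GG f y := by
    have c1 := sq_sum_le_card_mul_sum_sq (s := (Finset.univ : Finset (Fin 3)))
      (f := fun i => |pd i f y|)
    have c2 := sq_sum_le_card_mul_sum_sq (s := (Finset.univ : Finset (Fin 3 × Fin 3)))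
      (f := fun i => |pd i.1 (pd i.2 f) y|)
    simp only [sq_abs, Finset.card_univ, Fintype.card_prod, Fintype.card_fin,
      Fintype.sum_prod_type] at c1 c2
    unfold GG
    have c0 := sq_abs (f y)
    push_cast at c1 c2
    set a := |f y|
    set b := ∑ i, |pd i f y|
    set c := ∑ i, ∑ j, |pd i (pd j f) y|
    have : (a + b + c) ^ 2 ≤ 13 * (a ^ 2 + b ^ 2 / 3 + c ^ 2 / 9) := by
      nlinarith [sq_nonneg (3 * a - b), sq_nonneg (9 * a - c), sq_nonneg (3 * b - c)]
    linarith
  calc gdd f x v s ^ 2 = |gdd f x v s| ^ 2 := (sq_abs _).symm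
    _ ≤ (4 * (|f y| + ∑ i, |pd i f y| + ∑ i, ∑ j, |pd i (pd j f) y|)) ^ 2 :=
        pow_le_pow_left₀ (abs_nonneg _) A 2
    _ ≤ _ := by rw [mul_pow]; linarith

lemma line_sq {f : R3 → ℝ} (hf : ContDiff ℝ (⊤ : ℕ∞) f) (x v : R3) (hv : ∀ i, |v i| ≤ 1) :
    f x ^ 2 ≤ ∫ s in (0:ℝ)..1, 416 * s ^ (5 / 2 : ℝ) * GG f (x + s • v) := by
  have hGc := GG_cont hf
  have hrc : Continuous fun s : ℝ => s ^ (5 / 2 : ℝ) :=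
    Real.continuous_rpow_const (by norm_num)
  have hc : Continuous fun s : ℝ => s ^ (5 / 2 : ℝ) * GG f (x + s • v) := by fun_prop
  set I := ∫ s in (0:ℝ)..1, s ^ (5 / 2 : ℝ) * GG f (x + s • v) with hI
  have hI2 : ∫ s in (0:ℝ)..1, 416 * s ^ (5 / 2 : ℝ) * GG f (x + s • v) = 416 * I := by
    rw [hI, ← intervalIntegral.integral_const_mul]
    simp only [mul_assoc]
  rw [hI2]
  by_cases h0 : f x = 0
  · rw [h0]
    have : 0 ≤ I := intervalIntegral.integral_nonneg (by norm_num) fun s hs =>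
      mul_nonneg (Real.rpow_nonneg hs.1 _) (GG_nonneg _ _)
    nlinarith
  have hp : 0 < |f x| := abs_pos.2 h0
  set L := |f x| / 2 with hL
  have hLp : 0 < L := by positivity
  have hIntg : IntervalIntegrable (fun s : ℝ => s ^ (-1 / 2 : ℝ)) volume 0 1 :=
    intervalIntegral.intervalIntegrable_rpow' (by norm_num)
  have hval : ∫ s in (0:ℝ)..1, s ^ (-1 / 2 : ℝ) = 2 := by
    rw [integral_rpow (Or.inl (by norm_num))]; norm_num
  have step : |f x| ≤ ∫ s in (0:ℝ)..1, ((L / 2) * s ^ (-1 / 2 : ℝ)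
      + (104 / L) * (s ^ (5 / 2 : ℝ) * GG f (x + s • v))) := by
    rw [line_repr hf x v]
    refine (intervalIntegral.abs_integral_le_integral_abs (by norm_num)).trans ?_
    refine intervalIntegral.integral_mono_on_of_le_Ioo (by norm_num)
      ((continuous_id.mul (gdd_cont hf x v)).abs.intervalIntegrable _ _)
      ((hIntg.const_mul _).add ((hc.intervalIntegrable _ _).const_mul _)) ?_
    intro s hs
    have hb := gdd_bound f x v hv s ⟨hs.1.le, hs.2.le⟩
    set a := s ^ (-1 / 4 : ℝ) with ha
    set b := s ^ (5 / 4 : ℝ) with hb'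
    have e1 : s ^ (-1 / 2 : ℝ) = a ^ 2 := by
      rw [ha, ← Real.rpow_natCast, ← Real.rpow_mul hs.1.le]; norm_num
    have e2 : s ^ (5 / 2 : ℝ) = b ^ 2 := by
      rw [hb', ← Real.rpow_natCast, ← Real.rpow_mul hs.1.le]; norm_num
    have e3 : s = a * b := by
      rw [ha, hb', ← Real.rpow_add hs.1]; norm_num
    have hG : |gdd f x v s| ^ 2 ≤ 208 * GG f (x + s • v) := by rw [sq_abs]; exact hb
    rw [e1, e2, abs_mul, abs_of_pos hs.1]
    set g := |gdd f x v s|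
    set G := GG f (x + s • v)
    have k1 : s * g ≤ L / 2 * a ^ 2 + 1 / (2 * L) * (b ^ 2 * g ^ 2) := by
      rw [e3]
      have : L / 2 * a ^ 2 + 1 / (2 * L) * (b ^ 2 * g ^ 2) - a * b * g
        = 1 / (2 * L) * (L * a - b * g) ^ 2 := by field_simp; ring
      have : 0 ≤ 1 / (2 * L) * (L * a - b * g) ^ 2 := by positivity
      linarith
    have k2 : 1 / (2 * L) * (b ^ 2 * g ^ 2) ≤ 1 / (2 * L) * (b ^ 2 * (208 * G)) := by gcongr
    have k3 : 1 / (2 * L) * (b ^ 2 * (208 * G)) = 104 / L * (b ^ 2 * G) := by field_simp; ring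
    linarith
  rw [intervalIntegral.integral_add (hIntg.const_mul _) ((hc.intervalIntegrable _ _).const_mul _),
    intervalIntegral.integral_const_mul, intervalIntegral.integral_const_mul, hval, ← hI] at step
  have : |f x| = 2 * L := by rw [hL]; ring
  have h3 : f x ^ 2 = 4 * L ^ 2 := by rw [← sq_abs, this]; ring
  rw [h3]
  rw [this] at step
  have h4 : L ≤ 104 / L * I := by linarith
  have h5 : L * L ≤ L * (104 / L * I) := mul_le_mul_of_nonneg_left h4 hLp.le
  have h6 : L * (104 / L * I) = 104 * I := by field_simp
  nlinarith

lemma scale_lint (H : R3 → ℝ≥0∞) (hH : Measurable H) (x : R3) (r : ℝ) (hr : r ≠ 0) :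
    ∫⁻ v, H (x + r • v) = ENNReal.ofReal (|r ^ 3|⁻¹) * ∫⁻ v, H v := by
  have h1 : ∫⁻ v, H (x + r • v) = ∫⁻ y, H (x + y) ∂(Measure.map (fun v : R3 => r • v) volume) := by
    rw [lintegral_map (by fun_prop) (by fun_prop)]
  have h2 := Measure.map_addHaar_smul (volume : Measure R3) hr
  have h2' : Measure.map (fun v : R3 => r • v) volume = _ := h2
  rw [h1, h2', lintegral_smul_measure, lintegral_add_left_eq_self (μ := (volume : Measure R3))]
  simp [abs_inv]

lemma sobolev (hh : ℝ) (hhh : 0 < hh) : ∃ c : ℝ, 0 < c ∧ ∀ f : R3 → ℝ,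
    ContDiff ℝ (⊤ : ℕ∞) f →
    (∀ l : List (Fin 3), IntegrableOn (fun x => (pdL l f x) ^ 2) (slab hh) volume) →
    ∀ x ∈ slab hh, f x ^ 2 ≤ c * HSq hh 2 f := by
  set a := min 1 (hh / 2) with ha
  have hap : 0 < a := lt_min one_pos (by positivity)
  refine ⟨(a ^ 3)⁻¹ * 832 * 13, by positivity, ?_⟩
  intro f hf hI x hx
  obtain ⟨hGi, hGb⟩ := GG_int hI
  have hGc := GG_cont hf
  -- direction
  obtain ⟨ε, hε1, hε⟩ : ∃ ε : ℝ, |ε| = 1 ∧ ∀ τ ∈ Set.Ioo 0 a, x 2 + ε * τ ∈ Set.Ioo 0 hh := by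
    have hx' : x 2 ∈ Set.Ioo 0 hh := hx
    have ha2 : a ≤ hh / 2 := min_le_right _ _
    by_cases hc : x 2 ≤ hh / 2
    · refine ⟨1, by simp, fun τ hτ => ⟨?_, ?_⟩⟩ <;> linarith [hτ.1, hτ.2, hx'.1, hx'.2]
    · refine ⟨-1, by simp, fun τ hτ => ⟨?_, ?_⟩⟩ <;> linarith [hτ.1, hτ.2, hx'.1, hx'.2]
  have hε0 : ε ≠ 0 := by rintro rfl; simp at hε1
  set Q : Set R3 := Set.pi Set.univ fun _ => Set.Ioo 0 a with hQ
  have hQm : MeasurableSet Q := MeasurableSet.univ_pi fun _ => measurableSet_Ioo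
  have hQv : volume Q = ENNReal.ofReal (a ^ 3) := by
    rw [hQ, Real.volume_pi_Ioo]; simp [ENNReal.ofReal_pow hap.le]
  set H : R3 → ℝ≥0∞ := (slab hh).indicator fun y => ENNReal.ofReal (GG f y) with hHdef
  have hHm : Measurable H :=
    (ENNReal.measurable_ofReal.comp hGc.measurable).indicator (slab_meas hh)
  have hHint : ∫⁻ y, H y = ENNReal.ofReal (∫ y in slab hh, GG f y) := by
    rw [hHdef, lintegral_indicator (slab_meas hh),
      ofReal_integral_eq_lintegral_ofReal hGi (ae_of_all _ fun y => GG_nonneg f y)]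
  have hw : Measurable fun s : ℝ => ENNReal.ofReal (416 * s ^ (5 / 2 : ℝ)) := by fun_prop
  -- pointwise in v
  have P1 : ∀ v ∈ Q, ENNReal.ofReal (f x ^ 2) ≤
      ∫⁻ s in Set.Ioo (0:ℝ) 1, ENNReal.ofReal (416 * s ^ (5 / 2 : ℝ)) * H (x + (s * ε) • v) := by
    intro v hv
    have hv' : ∀ i, v i ∈ Set.Ioo 0 a := fun i => hv i (Set.mem_univ _)
    have hl := line_sq hf x (ε • v) (by
      intro i
      have := hv' i
      simp only [Pi.smul_apply, smul_eq_mul, abs_mul, hε1, one_mul]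
      rw [abs_of_pos this.1]
      exact this.2.le.trans (min_le_left _ _))
    have hrc : Continuous fun s : ℝ => s ^ (5 / 2 : ℝ) :=
      Real.continuous_rpow_const (by norm_num)
    have hc : Continuous fun s : ℝ => 416 * s ^ (5 / 2 : ℝ) * GG f (x + s • ε • v) := by fun_prop
    rw [intervalIntegral.integral_of_le zero_le_one, integral_Ioc_eq_integral_Ioo] at hl
    refine (ENNReal.ofReal_le_ofReal hl).trans ?_
    rw [ofReal_integral_eq_lintegral_ofReal
      ((hc.integrableOn_Icc (a := 0) (b := 1)).mono_set Set.Ioo_subset_Icc_self)]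
    · refine setLIntegral_mono' measurableSet_Ioo fun s hs => ?_
      have hmem : x + (s * ε) • v ∈ slab hh := by
        have h2 := hv' 2
        have := hε (s * v 2) ⟨mul_pos hs.1 h2.1, by
          have := mul_lt_mul'' hs.2 h2.2 hs.1.le h2.1.le
          linarith⟩
        have e : (x + (s * ε) • v) 2 = x 2 + ε * (s * v 2) := by simp; ring
        show (x + (s * ε) • v) 2 ∈ Set.Ioo 0 hh
        rw [e]; exact this
      rw [hHdef, Set.indicator_of_mem hmem, ← ENNReal.ofReal_mul, smul_smul]
      have := Real.rpow_nonneg hs.1.le (5 / 2)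
      positivity
    · refine (ae_restrict_iff' measurableSet_Ioo).2 (ae_of_all _ fun s hs => ?_)
      have := Real.rpow_nonneg hs.1.le (5 / 2)
      have := GG_nonneg f (x + s • ε • v)
      simp only [Pi.zero_apply]
      positivity
  have P2 : ENNReal.ofReal (f x ^ 2) * volume Q ≤
      ∫⁻ v in Q, ∫⁻ s in Set.Ioo (0:ℝ) 1,
        ENNReal.ofReal (416 * s ^ (5 / 2 : ℝ)) * H (x + (s * ε) • v) := by
    rw [← setLIntegral_const]
    exact setLIntegral_mono' hQm P1
  rw [lintegral_lintegral_swap] at P2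
  swap
  · refine Measurable.aemeasurable ?_
    refine (hw.comp measurable_snd).mul (hHm.comp ?_)
    fun_prop
  have P3 : ∀ s ∈ Set.Ioo (0:ℝ) 1, ∫⁻ v in Q,
      ENNReal.ofReal (416 * s ^ (5 / 2 : ℝ)) * H (x + (s * ε) • v) ≤
      ENNReal.ofReal (416 * s ^ (-1 / 2 : ℝ)) * ∫⁻ y, H y := by
    intro s hs
    refine (setLIntegral_le_lintegral _ _).trans ?_
    have hm' : Measurable fun v : R3 => H (x + (s * ε) • v) := hHm.comp (by fun_prop)
    rw [lintegral_const_mul _ hm',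
      scale_lint H hHm x (s * ε) (mul_ne_zero hs.1.ne' hε0), ← mul_assoc,
      ← ENNReal.ofReal_mul (by have := Real.rpow_nonneg hs.1.le (5 / 2); positivity)]
    refine le_of_eq ?_
    congr 2
    have : |(s * ε) ^ 3| = s ^ (3:ℝ) := by
      rw [abs_pow, abs_mul, hε1, abs_of_pos hs.1, mul_one, ← Real.rpow_natCast]; norm_num
    rw [this, ← Real.rpow_neg hs.1.le, mul_assoc, ← Real.rpow_add hs.1]; norm_num
  have P4 := P2.trans (setLIntegral_mono' measurableSet_Ioo P3)
  have hIntg : IntegrableOn (fun s : ℝ => 416 * s ^ (-1 / 2 : ℝ)) (Set.Ioo 0 1) := by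
    have : IntervalIntegrable (fun s : ℝ => s ^ (-1 / 2 : ℝ)) volume 0 1 :=
      intervalIntegral.intervalIntegrable_rpow' (by norm_num)
    rw [intervalIntegrable_iff_integrableOn_Ioo_of_le zero_le_one] at this
    exact this.const_mul _
  have hval : ∫ s in Set.Ioo (0:ℝ) 1, 416 * s ^ (-1 / 2 : ℝ) = 832 := by
    rw [integral_const_mul, ← integral_Ioc_eq_integral_Ioo,
      ← intervalIntegral.integral_of_le zero_le_one, integral_rpow (Or.inl (by norm_num))]
    norm_num
  rw [lintegral_mul_const _ (by fun_prop), ← ofReal_integral_eq_lintegral_ofReal hIntg, hval, hHint,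
    hQv, ← ENNReal.ofReal_mul (sq_nonneg _), ← ENNReal.ofReal_mul (by norm_num),
    ENNReal.ofReal_le_ofReal_iff] at P4
  · have : f x ^ 2 = (a ^ 3)⁻¹ * (f x ^ 2 * a ^ 3) := by field_simp
    rw [this, mul_assoc, mul_assoc]
    refine mul_le_mul_of_nonneg_left ?_ (by positivity)
    linarith
  · have : 0 ≤ ∫ y in slab hh, GG f y := integral_nonneg fun y => GG_nonneg f y
    positivity
  · refine (ae_restrict_iff' measurableSet_Ioo).2 (ae_of_all _ fun s hs => ?_)
    have := Real.rpow_nonneg hs.1.le (-1 / 2)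
    simp only [Pi.zero_apply]
    positivity

lemma ibp (hh : ℝ) (hhh : 0 < hh) (i : Fin 3) (φ : R3 → ℝ) (hφ : ContDiff ℝ (⊤ : ℕ∞) φ)
    (h0 : IntegrableOn φ (slab hh)) (h1 : IntegrableOn (pd i φ) (slab hh))
    (hb : i = 2 → ∀ x ∈ bdry hh, φ x = 0) :
    ∫ x in slab hh, pd i φ x = 0 := by
  have hmp := (volume_preserving_piFinSuccAbove (fun _ : Fin 3 => ℝ) i).symm
  set e := (MeasurableEquiv.piFinSuccAbove (fun _ : Fin 3 => ℝ) i).symm with he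
  have hee : ∀ s y, e (s, y) = i.insertNth s y := fun s y => rfl
  have hme : MeasurableEmbedding e := e.measurableEmbedding
  have hlin : ∀ (s : ℝ) (y : Fin 2 → ℝ), e (s, y) = e (0, y) + s • unitv i := by
    intro s y
    rw [hee, hee]
    ext k
    rcases Fin.eq_self_or_eq_succAbove i k with rfl | ⟨j, rfl⟩
    · simp [unitv]
    · simp [unitv]
  have hder : ∀ (y : Fin 2 → ℝ) (s : ℝ),
      HasDerivAt (fun s => φ (e (s, y))) (pd i φ (e (s, y))) s := by
    intro y s
    have := line_deriv hφ (e (0, y)) (unitv i) s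
    simp only [← hlin] at this
    simpa [unitv] using this
  have g0 : Integrable ((slab hh).indicator φ) := (integrable_indicator_iff (slab_meas hh)).2 h0
  have g1 : Integrable ((slab hh).indicator (pd i φ)) :=
    (integrable_indicator_iff (slab_meas hh)).2 h1
  have k0 := (hmp.integrable_comp_emb hme).2 g0
  have k1 := (hmp.integrable_comp_emb hme).2 g1
  rw [← integral_indicator (slab_meas hh), ← hmp.integral_comp hme]
  have k1' : Integrable (fun z : ℝ × (Fin 2 → ℝ) => (slab hh).indicator (pd i φ) (e z))
    ((volume : Measure ℝ).prod (volume : Measure (Fin 2 → ℝ))) := k1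
  have k0' : Integrable (fun z : ℝ × (Fin 2 → ℝ) => (slab hh).indicator φ (e z))
    ((volume : Measure ℝ).prod (volume : Measure (Fin 2 → ℝ))) := k0
  have hfub := integral_prod_symm _ k1'
  refine hfub.trans ?_
  refine integral_eq_zero_of_ae ?_
  filter_upwards [k1'.prod_left_ae, k0'.prod_left_ae] with y hy1 hy0
  simp only [Pi.zero_apply]
  by_cases hi : i = 2
  · have hval : ∀ s, e (s, y) 2 = s := by
      intro s; rw [hee, ← hi]; simp
    have hind : ∀ s, (slab hh).indicator (pd i φ) (e (s, y))
        = (Set.Ioo 0 hh).indicator (fun s => pd i φ (e (s, y))) s := by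
      intro s
      by_cases hs : s ∈ Set.Ioo 0 hh
      · rw [Set.indicator_of_mem hs, Set.indicator_of_mem]
        show e (s, y) 2 ∈ Set.Ioo 0 hh
        rwa [hval]
      · rw [Set.indicator_of_notMem hs, Set.indicator_of_notMem]
        show ¬ (e (s, y) 2 ∈ Set.Ioo 0 hh)
        rwa [hval]
    simp only [hind]
    rw [integral_indicator measurableSet_Ioo, ← integral_Ioc_eq_integral_Ioo,
      ← intervalIntegral.integral_of_le hhh.le]
    have hcont : Continuous fun s : ℝ => pd i φ (e (s, y)) := by
      have := (pd_smooth hφ i).continuous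
      have h2 : (fun s : ℝ => pd i φ (e (s, y))) = fun s => pd i φ (e (0, y) + s • unitv i) := by
        funext s; rw [hlin]
      rw [h2]; fun_prop
    rw [intervalIntegral.integral_eq_sub_of_hasDerivAt (fun s _ => hder y s)
      (hcont.intervalIntegrable _ _), hb hi _ (Or.inr (hval hh)), hb hi _ (Or.inl (hval 0)), sub_zero]
  · obtain ⟨k, hk⟩ := Fin.exists_succAbove_eq (Ne.symm hi)
    have hval : ∀ s, e (s, y) 2 = y k := by
      intro s; rw [hee, ← hk]; simp
    by_cases hy : y k ∈ Set.Ioo 0 hh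
    · have hmem : ∀ s, e (s, y) ∈ slab hh := by
        intro s
        show e (s, y) 2 ∈ Set.Ioo 0 hh
        rwa [hval]
      have hind : ∀ (ψ : R3 → ℝ) s, (slab hh).indicator ψ (e (s, y)) = ψ (e (s, y)) :=
        fun ψ s => Set.indicator_of_mem (hmem s) _
      simp only [hind] at hy0 hy1 ⊢
      exact integral_eq_zero_of_hasDerivAt_of_integrable (hder y) hy1 hy0
    · have hmem : ∀ s, e (s, y) ∉ slab hh := by
        intro s
        show ¬ (e (s, y) 2 ∈ Set.Ioo 0 hh)
        rwa [hval]
      have hind : ∀ (ψ : R3 → ℝ) s, (slab hh).indicator ψ (e (s, y)) = 0 :=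
        fun ψ s => Set.indicator_of_notMem (hmem s) _
      simp [hind]

lemma mul_int {hh : ℝ} {f g : R3 → ℝ} (hf : Continuous f) (hg : Continuous g)
    (h1 : IntegrableOn (fun x => f x ^ 2) (slab hh)) (h2 : IntegrableOn (fun x => g x ^ 2) (slab hh)) :
    IntegrableOn (fun x => f x * g x) (slab hh) := by
  have a1 : MemLp f 2 (volume.restrict (slab hh)) :=
    (memLp_two_iff_integrable_sq hf.aestronglyMeasurable).2 h1
  have a2 : MemLp g 2 (volume.restrict (slab hh)) :=
    (memLp_two_iff_integrable_sq hg.aestronglyMeasurable).2 h2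
  exact a1.integrable_mul a2

lemma pd_mul {f g : R3 → ℝ} (hf : ContDiff ℝ (⊤ : ℕ∞) f) (hg : ContDiff ℝ (⊤ : ℕ∞) g)
    (i : Fin 3) (x : R3) :
    pd i (fun y => f y * g y) x = pd i f x * g x + f x * pd i g x := by
  have h1 := (hf.differentiable (by simp)) x
  have h2 := (hg.differentiable (by simp)) x
  unfold pd
  rw [fderiv_fun_mul h1 h2]
  simp; ring

lemma pd_add {f g : R3 → ℝ} (hf : ContDiff ℝ (⊤ : ℕ∞) f) (hg : ContDiff ℝ (⊤ : ℕ∞) g)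
    (i : Fin 3) (x : R3) (c : ℝ) :
    pd i (fun y => f y + c * g y) x = pd i f x + c * pd i g x := by
  have h1 := (hf.differentiable (by simp)) x
  have h2 := (hg.differentiable (by simp)) x
  unfold pd
  rw [fderiv_fun_add h1 (h2.const_mul c), fderiv_const_mul h2]
  simp

/-- divergence-free fields tangent to the boundary are orthogonal to gradients -/
lemma grad_orth (hh : ℝ) (hhh : 0 < hh) (p : R3 → ℝ) (w : Fin 3 → R3 → ℝ)
    (hp : ContDiff ℝ (⊤ : ℕ∞) p) (hw : ∀ i, ContDiff ℝ (⊤ : ℕ∞) (w i))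
    (p0 : IntegrableOn (fun x => p x ^ 2) (slab hh))
    (p1 : ∀ i, IntegrableOn (fun x => pd i p x ^ 2) (slab hh))
    (w0 : ∀ i, IntegrableOn (fun x => w i x ^ 2) (slab hh))
    (w1 : ∀ i, IntegrableOn (fun x => pd i (w i) x ^ 2) (slab hh))
    (hdiv : ∀ x ∈ slab hh, ∑ i, pd i (w i) x = 0)
    (hb : ∀ x ∈ bdry hh, w 2 x = 0) :
    ∫ x in slab hh, ∑ i, pd i p x * w i x = 0 := by
  have a1 : ∀ i, IntegrableOn (fun x => pd i p x * w i x) (slab hh) := fun i =>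
    mul_int (pd_smooth hp i).continuous (hw i).continuous (p1 i) (w0 i)
  have a2 : ∀ i, IntegrableOn (fun x => p x * pd i (w i) x) (slab hh) := fun i =>
    mul_int hp.continuous (pd_smooth (hw i) i).continuous p0 (w1 i)
  have a3 : ∀ i, IntegrableOn (fun x => p x * w i x) (slab hh) := fun i =>
    mul_int hp.continuous (hw i).continuous p0 (w0 i)
  have a4 : ∀ i, pd i (fun x => p x * w i x) = fun x => pd i p x * w i x + p x * pd i (w i) x :=
    fun i => funext fun x => pd_mul hp (hw i) i x
  have a5 : ∀ i, IntegrableOn (pd i (fun x => p x * w i x)) (slab hh) := fun i => by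
    rw [a4]; exact (a1 i).add (a2 i)
  have a6 : ∀ i, ∫ x in slab hh, pd i (fun x => p x * w i x) x = 0 := fun i => by
    refine ibp hh hhh i _ (hp.mul (hw i)) (a3 i) (a5 i) ?_
    rintro rfl x hx
    simp [hb x hx]
  have a7 : ∫ x in slab hh, ∑ i, pd i p x * w i x
      = ∫ x in slab hh, ∑ i, pd i (fun x => p x * w i x) x := by
    refine setIntegral_congr_fun (slab_meas hh) fun x hx => ?_
    simp only [a4, Finset.sum_add_distrib, ← Finset.mul_sum, hdiv x hx, mul_zero, add_zero]
  rw [a7, integral_finsetSum _ fun i _ => a5 i]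
  simp [a6]

lemma slice_smooth {f : ℝ → R3 → ℝ} (hf : ContDiff ℝ (⊤ : ℕ∞) (Function.uncurry f)) (t : ℝ) :
    ContDiff ℝ (⊤ : ℕ∞) (f t) :=
  hf.comp (contDiff_const.prodMk contDiff_id)

lemma dt_eq {f : ℝ → R3 → ℝ} (hf : ContDiff ℝ (⊤ : ℕ∞) (Function.uncurry f)) (t : ℝ) (x : R3) :
    dt f t x = fderiv ℝ (Function.uncurry f) (t, x) (1, 0) := by
  have h1 : HasDerivAt (fun s : ℝ => (s, x)) ((1 : ℝ), (0 : R3)) t :=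
    (hasDerivAt_id t).prodMk (hasDerivAt_const t x)
  exact (((hf.differentiable (by simp)) (t, x)).hasFDerivAt.comp_hasDerivAt t h1).deriv

lemma pd_eq {f : ℝ → R3 → ℝ} (hf : ContDiff ℝ (⊤ : ℕ∞) (Function.uncurry f)) (t : ℝ) (x : R3)
    (i : Fin 3) : pd i (f t) x = fderiv ℝ (Function.uncurry f) (t, x) (0, unitv i) := by
  have h1 : HasFDerivAt (fun y : R3 => (t, y)) (ContinuousLinearMap.inr ℝ ℝ R3) x :=
    hasFDerivAt_prodMk_right t x
  have := ((hf.differentiable (by simp)) (t, x)).hasFDerivAt.comp x h1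
  have h2 : fderiv ℝ (f t) x = _ := this.fderiv
  rw [pd, h2]; simp

lemma dt_smooth {f : ℝ → R3 → ℝ} (hf : ContDiff ℝ (⊤ : ℕ∞) (Function.uncurry f)) (t : ℝ) :
    ContDiff ℝ (⊤ : ℕ∞) (dt f t) := by
  have : dt f t = fun x => fderiv ℝ (Function.uncurry f) (t, x) (1, 0) := funext (dt_eq hf t)
  rw [this]
  have h := (hf.fderiv_right (m := ((⊤ : ℕ∞) : WithTop ℕ∞)) (by simp))
  exact (h.comp (contDiff_const.prodMk contDiff_id)).clm_apply contDiff_const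

lemma eval_deriv {Φ : ℝ × R3 → (ℝ × R3 →L[ℝ] ℝ)} {Φ' : ℝ × R3 →L[ℝ] (ℝ × R3 →L[ℝ] ℝ)}
    {t : ℝ} {x : R3} (hD : HasFDerivAt Φ Φ' (t, x)) (v : ℝ × R3) :
    HasFDerivAt (fun z => Φ z v) ((ContinuousLinearMap.apply ℝ ℝ v).comp Φ') (t, x) :=
  (ContinuousLinearMap.apply ℝ ℝ v).hasFDerivAt.comp (t, x) hD

lemma eval_deriv1 {Φ : ℝ × R3 → (ℝ × R3 →L[ℝ] ℝ)} {Φ' : ℝ × R3 →L[ℝ] (ℝ × R3 →L[ℝ] ℝ)}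
    {t : ℝ} {x : R3} (hD : HasFDerivAt Φ Φ' (t, x)) (v : ℝ × R3) :
    HasDerivAt (fun s => Φ (s, x) v) (Φ' (1, 0) v) t := by
  have h1 : HasDerivAt (fun s : ℝ => (s, x)) ((1 : ℝ), (0 : R3)) t :=
    (hasDerivAt_id t).prodMk (hasDerivAt_const t x)
  exact (eval_deriv hD v).comp_hasDerivAt t h1

lemma eval_deriv2 {Φ : ℝ × R3 → (ℝ × R3 →L[ℝ] ℝ)} {Φ' : ℝ × R3 →L[ℝ] (ℝ × R3 →L[ℝ] ℝ)}
    {t : ℝ} {x : R3} (hD : HasFDerivAt Φ Φ' (t, x)) (v : ℝ × R3) (y : R3) :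
    fderiv ℝ (fun x => Φ (t, x) v) x y = Φ' (0, y) v := by
  have h2 : HasFDerivAt (fun y : R3 => (t, y)) (ContinuousLinearMap.inr ℝ ℝ R3) x :=
    hasFDerivAt_prodMk_right t x
  have h3 := ((eval_deriv hD v).comp x h2).fderiv
  have h4 : fderiv ℝ (fun x => Φ (t, x) v) x = _ := h3
  rw [h4]; simp

lemma pd_dt {f : ℝ → R3 → ℝ} (hf : ContDiff ℝ (⊤ : ℕ∞) (Function.uncurry f)) (t : ℝ) (x : R3)
    (i : Fin 3) : HasDerivAt (fun s => pd i (f s) x) (pd i (dt f t) x) t := by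
  have h := (hf.fderiv_right (m := ((⊤ : ℕ∞) : WithTop ℕ∞)) (by simp))
  have hD := ((h.differentiable (by simp)) (t, x)).hasFDerivAt
  have e1 : dt f t = fun x => fderiv ℝ (Function.uncurry f) (t, x) (1, 0) := funext (dt_eq hf t)
  have e2 : (fun s => pd i (f s) x) = fun s => fderiv ℝ (Function.uncurry f) (s, x) (0, unitv i) :=
    funext fun s => pd_eq hf s x i
  have hs : IsSymmSndFDerivAt ℝ (Function.uncurry f) (t, x) :=
    (hf.contDiffAt).isSymmSndFDerivAt (by
      rw [minSmoothness_of_isRCLikeNormedField]; exact WithTop.coe_le_coe.2 (le_top : (2 : ℕ∞) ≤ ⊤))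
  have d2 : pd i (dt f t) x
      = fderiv ℝ (fderiv ℝ (Function.uncurry f)) (t, x) (0, unitv i) (1, 0) := by
    rw [e1]; exact eval_deriv2 hD (1, 0) (unitv i)
  rw [e2, d2, hs.eq]
  exact eval_deriv1 hD (0, unitv i)

lemma sum_sq_mul_le (a b : Fin 3 → ℝ) (A : ℝ) (ha : ∀ i, a i ^ 2 ≤ A) :
    (∑ i, a i * b i) ^ 2 ≤ 3 * A * ∑ i, b i ^ 2 := by
  have h := Finset.sum_mul_sq_le_sq_mul_sq Finset.univ a b
  have h2 : ∑ i, a i ^ 2 ≤ 3 * A := by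
    have := Finset.sum_le_sum (s := Finset.univ) fun i _ => ha i
    simpa using this
  exact h.trans (mul_le_mul_of_nonneg_right h2 (by positivity))

lemma sum_sq_le3 (b : Fin 3 → ℝ) : (∑ i, b i) ^ 2 ≤ 3 * ∑ i, b i ^ 2 := by
  simpa using sum_sq_mul_le 1 b 1 (by simp)

/-- final scalar estimate -/
lemma final_scalar (c hh μ k κ s n1 n2 p1 p2 q : ℝ) (hc : 0 < c) (hhh : 0 < hh)
    (hκ : 0 < κ) (hk : 0 < k)
    (hs : 0 ≤ s) (h1 : 0 ≤ n1) (h2 : 0 ≤ n2) (h3 : 0 ≤ p1) (h4 : 0 ≤ p2) (h5 : 0 ≤ q) :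
    36 * μ ^ 2 * n2 ^ 2 + 36 * c * (2 * (1 + hh) ^ 2 + 2 * k ^ 2 * (c * s ^ 2)) * n2 ^ 2 * n1 ^ 2
      + 36 * c * p2 ^ 2 * p1 ^ 2 + 4 * κ ^ 2 * q ^ 2 ≤
    (36 * μ ^ 2 + 36 * c * (2 * (1 + hh) ^ 2 + 2 * c) + 36 * c + 4) *
      (κ * q + (1 + (1 + k * s) * n1) * n2 + p1 * p2) ^ 2 := by
  set Y := κ * q + (1 + (1 + k * s) * n1) * n2 + p1 * p2 with hY
  have hks : 0 ≤ k * s := by positivity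
  have a0 : 0 ≤ κ * q := by positivity
  have a1 : 0 ≤ (1 + k * s) * n1 * n2 := by positivity
  have a2 : 0 ≤ p1 * p2 := by positivity
  have hYe : Y = κ * q + n2 + (1 + k * s) * n1 * n2 + p1 * p2 := by rw [hY]; ring
  have b1 : n2 ^ 2 ≤ Y ^ 2 := pow_le_pow_left₀ h2 (by linarith) 2
  have b2 : ((1 + k * s) * n1 * n2) ^ 2 ≤ Y ^ 2 := pow_le_pow_left₀ a1 (by linarith) 2
  have b3 : (p1 * p2) ^ 2 ≤ Y ^ 2 := pow_le_pow_left₀ a2 (by linarith) 2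
  have b4 : (κ * q) ^ 2 ≤ Y ^ 2 := pow_le_pow_left₀ a0 (by linarith) 2
  have e : (2 * (1 + hh) ^ 2 + 2 * k ^ 2 * (c * s ^ 2)) ≤
      (2 * (1 + hh) ^ 2 + 2 * c) * (1 + k * s) ^ 2 := by
    have t1 : 1 ≤ (1 + k * s) ^ 2 := by nlinarith
    have t2 : (k * s) ^ 2 ≤ (1 + k * s) ^ 2 := pow_le_pow_left₀ hks (by linarith) 2
    have t3 : 2 * (1 + hh) ^ 2 * 1 ≤ 2 * (1 + hh) ^ 2 * (1 + k * s) ^ 2 := by gcongr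
    have t4 : 2 * c * (k * s) ^ 2 ≤ 2 * c * (1 + k * s) ^ 2 := by gcongr
    linarith
  have e2 : 36 * c * (2 * (1 + hh) ^ 2 + 2 * k ^ 2 * (c * s ^ 2)) * n2 ^ 2 * n1 ^ 2 ≤
      36 * c * (2 * (1 + hh) ^ 2 + 2 * c) * Y ^ 2 := by
    calc _ ≤ 36 * c * ((2 * (1 + hh) ^ 2 + 2 * c) * (1 + k * s) ^ 2) * n2 ^ 2 * n1 ^ 2 := by gcongr
      _ = 36 * c * (2 * (1 + hh) ^ 2 + 2 * c) * ((1 + k * s) * n1 * n2) ^ 2 := by ring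
      _ ≤ _ := by gcongr
  have e1 : 36 * μ ^ 2 * n2 ^ 2 ≤ 36 * μ ^ 2 * Y ^ 2 := by gcongr
  have e3 : 36 * c * (p1 * p2) ^ 2 ≤ 36 * c * Y ^ 2 := by gcongr
  linarith

/-- pointwise estimate of one component -/
lemma comp_pt (d r w a b e g pj R : ℝ) (hd : 0 < d) (hr : d ≤ r)
    (hE : r * w = a + b + e + g - pj) (hR : 4 * (a ^ 2 + b ^ 2 + e ^ 2 + g ^ 2) ≤ R) :
    d ^ 2 * w ^ 2 + 2 * d * (pj * w) ≤ R := by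
  have h1 : d * w ^ 2 ≤ r * w ^ 2 := by gcongr
  have h2 : r * w ^ 2 = (a + b + e + g) * w - pj * w := by
    calc r * w ^ 2 = (r * w) * w := by ring
      _ = _ := by rw [hE]; ring
  have h3 : (a + b + e + g) ^ 2 ≤ 4 * (a ^ 2 + b ^ 2 + e ^ 2 + g ^ 2) := by
    nlinarith [sq_nonneg (a - b), sq_nonneg (a - e), sq_nonneg (a - g), sq_nonneg (b - e),
      sq_nonneg (b - g), sq_nonneg (e - g)]
  have h4 : d * (d * w ^ 2) ≤ d * ((a + b + e + g) * w - pj * w) :=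
    mul_le_mul_of_nonneg_left (by linarith) hd.le
  nlinarith [sq_nonneg (d * w - (a + b + e + g))]

/-- horizontal remainder of the capillary force after removing a gradient -/
noncomputable def qq (σ : R3 → ℝ) (j : Fin 3) (x : R3) : ℝ :=
  if j = 2 then laph σ x else - pd j (pd 2 σ) x

lemma main_est (hh μ d c κ : ℝ) (hhh : 0 < hh) (hd : 0 < d)
    (hc : 0 < c) (hκ : 0 < κ)
    (hsob : ∀ f : R3 → ℝ, ContDiff ℝ (⊤ : ℕ∞) f →
      (∀ l : List (Fin 3), IntegrableOn (fun x => (pdL l f x) ^ 2) (slab hh) volume) →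
      ∀ x ∈ slab hh, f x ^ 2 ≤ c * HSq hh 2 f)
    (S B : R3 → ℝ) (U W : Fin 3 → R3 → ℝ)
    (hS : DReg hh S) (hB : DReg hh B) (hU : ∀ j, DReg hh (U j)) (hW : ∀ j, DReg hh (W j))
    (hdiv : ∀ x ∈ slab hh, ∑ i, pd i (W i) x = 0)
    (hb : ∀ x ∈ bdry hh, W 2 x = 0)
    (hr : ∀ x ∈ slab hh, d ≤ rho κ S x)
    (hE : ∀ x ∈ slab hh, ∀ j, rho κ S x * (W j x + ∑ i, U i x * pd i (U j) x) + pd j B x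
      = μ * lap (U j) x - lap S x * ((if j = 2 then κ else 0) + pd j S x)) :
    d ^ 2 * ∑ j, L2sq hh (W j) ≤
      36 * μ ^ 2 * (∑ j, HSq hh 2 (U j)) +
      36 * c * (2 * (1 + hh) ^ 2 + 2 * κ⁻¹ ^ 2 * (c * HSq hh 2 S)) * (∑ j, HSq hh 2 (U j))
        * (∑ j, HSq hh 1 (U j))
      + 36 * c * (∑ i, HSq hh 2 (pd i S)) * (∑ i, HSq hh 1 (pd i S))
      + 4 * κ ^ 2 * (L2sq hh (laph S) + L2sq hh (pd 0 (pd 2 S)) + L2sq hh (pd 1 (pd 2 S))) := by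
  set N2 := ∑ j, HSq hh 2 (U j) with hN2
  set P2 := ∑ i, HSq hh 2 (pd i S) with hP2
  set M := 2 * (1 + hh) ^ 2 + 2 * κ⁻¹ ^ 2 * (c * HSq hh 2 S) with hM
  have hN2p : 0 ≤ N2 := Finset.sum_nonneg fun _ _ => HSq_nonneg _ _ _
  have hP2p : 0 ≤ P2 := Finset.sum_nonneg fun _ _ => HSq_nonneg _ _ _
  have hMp : 0 ≤ M := by have := HSq_nonneg hh 2 S; positivity
  -- sup bounds
  have supU : ∀ x ∈ slab hh, ∀ i, U i x ^ 2 ≤ c * N2 := fun x hx i =>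
    (hsob (U i) (hU i).1 (hU i).2 x hx).trans (mul_le_mul_of_nonneg_left
      (Finset.single_le_sum (f := fun j => HSq hh 2 (U j)) (fun _ _ => HSq_nonneg _ _ _)
        (Finset.mem_univ i)) hc.le)
  have pdLapp : ∀ (l : List (Fin 3)) i f, pdL l (pd i f) = pdL (l ++ [i]) f := by
    intro l i f
    induction l with
    | nil => rfl
    | cons a l ih => show pd a _ = pd a _; rw [ih]; rfl
  have supS : ∀ x ∈ slab hh, ∀ i, pd i S x ^ 2 ≤ c * P2 := fun x hx i =>
    (hsob (pd i S) (pd_smooth hS.1 i) (fun l => by rw [pdLapp]; exact hS.2 _) x hx).trans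
      (mul_le_mul_of_nonneg_left
      (Finset.single_le_sum (f := fun j => HSq hh 2 (pd j S)) (fun _ _ => HSq_nonneg _ _ _)
        (Finset.mem_univ i)) hc.le)
  have supR : ∀ x ∈ slab hh, rho κ S x ^ 2 ≤ M := by
    intro x hx
    have h1 := hsob S hS.1 hS.2 x hx
    have hx' : x 2 ∈ Set.Ioo 0 hh := hx
    have h2 : (x 2 + 1) ^ 2 ≤ (1 + hh) ^ 2 :=
      pow_le_pow_left₀ (by linarith [hx'.1]) (by linarith [hx'.2]) 2
    have h3 : κ⁻¹ ^ 2 * S x ^ 2 ≤ κ⁻¹ ^ 2 * (c * HSq hh 2 S) := by gcongr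
    simp only [rho, rbar]
    nlinarith [sq_nonneg (x 2 + 1 - κ⁻¹ * S x)]
  -- pressure
  set p : R3 → ℝ := fun x => B x + κ * pd 2 S x with hp
  have hpd : ∀ j, pd j p = fun x => pd j B x + κ * pd j (pd 2 S) x := fun j =>
    funext fun x => pd_add hB.1 (pd_smooth hS.1 2) j x κ
  have sqadd : ∀ (f g : R3 → ℝ) (r : ℝ), Continuous f → Continuous g →
      IntegrableOn (fun x => f x ^ 2) (slab hh) → IntegrableOn (fun x => g x ^ 2) (slab hh) →
      IntegrableOn (fun x => (f x + r * g x) ^ 2) (slab hh) := by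
    intro f g r hf hg h1 h2
    have : (fun x => (f x + r * g x) ^ 2)
        = fun x => (f x ^ 2 + (2 * r) * (f x * g x)) + r ^ 2 * g x ^ 2 := by
      funext x; ring
    rw [this]
    exact (h1.add ((mul_int hf hg h1 h2).const_mul _)).add (h2.const_mul _)
  have hWc := fun j => (hW j).1.continuous
  have hpc : ∀ j, Continuous (pd j p) := fun j => by
    rw [hpd]
    have h1 := (pd_smooth hB.1 j).continuous
    have h2 := (pd_smooth (pd_smooth hS.1 2) j).continuous
    fun_prop
  have p0 : IntegrableOn (fun x => p x ^ 2) (slab hh) :=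
    sqadd _ _ _ hB.1.continuous (pd_smooth hS.1 2).continuous (hB.2 []) (hS.2 [2])
  have p1 : ∀ j, IntegrableOn (fun x => pd j p x ^ 2) (slab hh) := fun j => by
    rw [hpd]
    exact sqadd _ _ _ (pd_smooth hB.1 j).continuous (pd_smooth (pd_smooth hS.1 2) j).continuous
      (hB.2 [j]) (hS.2 [j, 2])
  have orth := grad_orth hh hhh p W (hB.1.add (contDiff_const.mul (pd_smooth hS.1 2)))
    (fun i => (hW i).1) p0 p1 (fun i => (hW i).2 []) (fun i => (hW i).2 [i]) hdiv hb
  -- the majorant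
  set R : Fin 3 → R3 → ℝ := fun j x => 12 * μ ^ 2 * (∑ i, pd i (pd i (U j)) x ^ 2)
    + 12 * c * M * N2 * (∑ i, pd i (U j) x ^ 2) + 12 * c * P2 * (∑ i, pd i (pd i S) x ^ 2)
    + 4 * κ ^ 2 * qq S j x ^ 2 with hR
  have pt : ∀ x ∈ slab hh, ∀ j, d ^ 2 * W j x ^ 2 + 2 * d * (pd j p x * W j x) ≤ R j x := by
    intro x hx j
    refine comp_pt d (rho κ S x) (W j x) (μ * lap (U j) x)
      (- (rho κ S x * ∑ i, U i x * pd i (U j) x)) (- (lap S x * pd j S x)) (- (κ * qq S j x))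
      (pd j p x) _ hd (hr x hx) ?_ ?_
    · have h1 := hE x hx j
      rw [hpd]
      have h2 : lap S x * (if j = 2 then κ else 0) = κ * qq S j x + κ * pd j (pd 2 S) x := by
        by_cases hj : j = 2
        · subst hj
          simp only [qq, if_true, lap, laph, Fin.sum_univ_three]; ring
        · simp [qq, hj]
      simp only
      linarith
    · have l1 : lap (U j) x ^ 2 ≤ 3 * ∑ i, pd i (pd i (U j)) x ^ 2 := sum_sq_le3 _
      have l2 : lap S x ^ 2 ≤ 3 * ∑ i, pd i (pd i S) x ^ 2 := sum_sq_le3 _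
      have l3 := sum_sq_mul_le (fun i => U i x) (fun i => pd i (U j) x) _ (supU x hx)
      have l4 := mul_le_mul (supR x hx) l3 (sq_nonneg _) hMp
      have l5 := mul_le_mul l2 (supS x hx j) (sq_nonneg _) (by positivity)
      have l6 := mul_le_mul_of_nonneg_left l1 (sq_nonneg μ)
      simp only [hR, neg_sq, mul_pow]
      linarith
  have iU2 : ∀ j, IntegrableOn (fun x => ∑ i, pd i (pd i (U j)) x ^ 2) (slab hh) := fun j =>
    integrable_finsetSum _ fun i _ => (hU j).2 [i, i]
  have iU1 : ∀ j, IntegrableOn (fun x => ∑ i, pd i (U j) x ^ 2) (slab hh) := fun j =>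
    integrable_finsetSum _ fun i _ => (hU j).2 [i]
  have iS2 : IntegrableOn (fun x => ∑ i, pd i (pd i S) x ^ 2) (slab hh) :=
    integrable_finsetSum _ fun i _ => hS.2 [i, i]
  have iq : ∀ j, IntegrableOn (fun x => qq S j x ^ 2) (slab hh) := by
    intro j
    by_cases hj : j = 2
    · have := sqadd (pd 0 (pd 0 S)) (pd 1 (pd 1 S)) 1 (pd_smooth (pd_smooth hS.1 0) 0).continuous
        (pd_smooth (pd_smooth hS.1 1) 1).continuous (hS.2 [0, 0]) (hS.2 [1, 1])
      simpa [qq, hj, laph] using this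
    · have : IntegrableOn (fun x => pd j (pd 2 S) x ^ 2) (slab hh) := hS.2 [j, 2]
      simpa [qq, hj] using this
  have iR : ∀ j, IntegrableOn (R j) (slab hh) := fun j =>
    ((((iU2 j).const_mul _).add ((iU1 j).const_mul _)).add (iS2.const_mul _)).add
      ((iq j).const_mul _)
  have iR1 : ∀ j, IntegrableOn (fun x => 12 * μ ^ 2 * (∑ i, pd i (pd i (U j)) x ^ 2)
    + 12 * c * M * N2 * (∑ i, pd i (U j) x ^ 2)) (slab hh) := fun j =>
    ((iU2 j).const_mul _).add ((iU1 j).const_mul _)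
  have iR2 : ∀ j, IntegrableOn (fun x => 12 * μ ^ 2 * (∑ i, pd i (pd i (U j)) x ^ 2)
    + 12 * c * M * N2 * (∑ i, pd i (U j) x ^ 2) + 12 * c * P2 * (∑ i, pd i (pd i S) x ^ 2))
    (slab hh) := fun j => (iR1 j).add (iS2.const_mul _)
  have vR : ∀ j, ∫ x in slab hh, R j x ≤ 36 * μ ^ 2 * HSq hh 2 (U j)
      + 36 * c * M * N2 * HSq hh 1 (U j) + 12 * c * P2 * (∑ i, HSq hh 1 (pd i S))
      + 4 * κ ^ 2 * L2sq hh (qq S j) := by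
    intro j
    rw [hR]
    simp only
    rw [integral_add (iR2 j) ((iq j).const_mul _), integral_add (iR1 j) (iS2.const_mul _),
      integral_add ((iU2 j).const_mul _) ((iU1 j).const_mul _),
      integral_const_mul, integral_const_mul, integral_const_mul, integral_const_mul,
      integral_finsetSum (f := fun i x => pd i (pd i (U j)) x ^ 2) _ (fun i _ => (hU j).2 [i, i]),
      integral_finsetSum (f := fun i x => pd i (U j) x ^ 2) _ (fun i _ => (hU j).2 [i]),
      integral_finsetSum (f := fun i x => pd i (pd i S) x ^ 2) _ (fun i _ => hS.2 [i, i])]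
    have s1 : ∑ i, ∫ x in slab hh, pdL [i, i] (U j) x ^ 2 ≤ 3 * HSq hh 2 (U j) := by
      have := Finset.sum_le_sum (s := (Finset.univ : Finset (Fin 3))) fun i _ =>
        L2sq_pdL_le hh 2 (U j) [i, i] (by simp)
      simpa [L2sq] using this
    have s2 : ∑ i, ∫ x in slab hh, pdL [i] (U j) x ^ 2 ≤ 3 * HSq hh 1 (U j) := by
      have := Finset.sum_le_sum (s := (Finset.univ : Finset (Fin 3))) fun i _ =>
        L2sq_pdL_le hh 1 (U j) [i] (by simp)
      simpa [L2sq] using this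
    have s3 : ∑ i, ∫ x in slab hh, pdL [i, i] S x ^ 2 ≤ ∑ i, HSq hh 1 (pd i S) :=
      Finset.sum_le_sum fun i _ => L2sq_pdL_le hh 1 (pd i S) [i] (by simp)
    have t1 := mul_le_mul_of_nonneg_left s1 (by positivity : 0 ≤ 12 * μ ^ 2)
    have t2 := mul_le_mul_of_nonneg_left s2 (by positivity : 0 ≤ 12 * c * M * N2)
    have t3 := mul_le_mul_of_nonneg_left s3 (by positivity : 0 ≤ 12 * c * P2)
    unfold L2sq
    simp only [pdL] at t1 t2 t3 ⊢
    linarith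
  -- integrate
  have iW : ∀ j, IntegrableOn (fun x => d ^ 2 * W j x ^ 2) (slab hh) := fun j =>
    Integrable.const_mul ((hW j).2 []) _
  have iWp : ∀ j, IntegrableOn (fun x => pd j p x * W j x) (slab hh) := fun j =>
    mul_int (hpc j) (hWc j) (p1 j) ((hW j).2 [])
  have iWs : IntegrableOn (fun x => ∑ j, d ^ 2 * W j x ^ 2) (slab hh) :=
    integrable_finsetSum _ fun j _ => iW j
  have iWps : IntegrableOn (fun x => ∑ j, pd j p x * W j x) (slab hh) :=
    integrable_finsetSum _ fun j _ => iWp j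
  have fin : ∫ x in slab hh, ((∑ j, d ^ 2 * W j x ^ 2) + 2 * d * ∑ j, pd j p x * W j x)
      ≤ ∫ x in slab hh, ∑ j, R j x := by
    refine setIntegral_mono_on (iWs.add (iWps.const_mul _))
      (integrable_finsetSum _ fun j _ => iR j) (slab_meas hh) fun x hx => ?_
    rw [Finset.mul_sum, ← Finset.sum_add_distrib]
    exact Finset.sum_le_sum fun j _ => pt x hx j
  rw [integral_add iWs (iWps.const_mul _), integral_const_mul, orth, mul_zero, add_zero,
    integral_finsetSum _ (fun j _ => iW j), integral_finsetSum _ (fun j _ => iR j)] at fin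
  simp only [integral_const_mul] at fin
  rw [← Finset.mul_sum] at fin
  have tot := fin.trans (Finset.sum_le_sum fun j _ => vR j)
  refine le_trans tot ?_
  have q0 : L2sq hh (qq S 0) = L2sq hh (pd 0 (pd 2 S)) := by simp [L2sq, qq]
  have q1 : L2sq hh (qq S 1) = L2sq hh (pd 1 (pd 2 S)) := by simp [L2sq, qq]
  have q2 : L2sq hh (qq S 2) = L2sq hh (laph S) := by simp [L2sq, qq]
  rw [hN2]
  simp only [Fin.sum_univ_three, q0, q1, q2]
  apply le_of_eq
  ring

lemma Y_nonneg {k κ s n1 n2 p1 p2 q : ℝ} (hκ : 0 ≤ κ) (hk : 0 ≤ k)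
    (hs : 0 ≤ s) (h1 : 0 ≤ n1) (h2 : 0 ≤ n2) (h3 : 0 ≤ p1) (h4 : 0 ≤ p2) (h5 : 0 ≤ q) :
    0 ≤ κ * q + (1 + (1 + k * s) * n1) * n2 + p1 * p2 := by positivity

lemma final_sqrt {L K d Y : ℝ} (hK : 0 < K) (hd : 0 < d) (hY : 0 ≤ Y)
    (h : d ^ 2 * L ≤ K * Y ^ 2) : Real.sqrt L ≤ Real.sqrt K / d * Y := by
  refine Real.sqrt_le_iff.2 ⟨by positivity, ?_⟩
  rw [mul_pow, div_pow, Real.sq_sqrt hK.le, div_mul_eq_mul_div, le_div_iff₀ (by positivity)]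
  linarith

end Helpers

/-- control of u_t by spatial norms, Lemma 2.5, (2.47). -/
theorem ut_control (hh μ d : ℝ)
    (hhh : 0 < hh) (hμ : 0 < μ) (hd : 0 < d) :
    ∃ C : ℝ, 0 < C ∧
      ∀ (κ T : ℝ), 0 < κ → 0 < T →
      ∀ (σ : ℝ → R3 → ℝ) (u : ℝ → R3 → Fin 3 → ℝ) (β : ℝ → R3 → ℝ),
        SReg hh σ → VReg hh u → SReg hh β →
        (∀ t ∈ Set.Ioo (0:ℝ) T, NSK hh μ κ σ u β t) →
        (∀ t ∈ Set.Ioo (0:ℝ) T, NavierBC hh u t) →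
        (∀ t ∈ Set.Ioo (0:ℝ) T, ∀ x ∈ slab hh, d ≤ rho κ (σ t) x) →
        ∀ t ∈ Set.Ioo (0:ℝ) T,
          utNorm hh 0 u t
            ≤ C * (κ * Real.sqrt (L2sq hh (laph (σ t)) + L2sq hh (pd 0 (pd 2 (σ t)))
                    + L2sq hh (pd 1 (pd 2 (σ t))))
                + (1 + (1 + κ⁻¹ * Hnorm hh 2 (σ t)) * VHnorm hh 1 (u t))
                    * VHnorm hh 2 (u t)
                + Real.sqrt (∑ i : Fin 3, HSq hh 1 (pd i (σ t)))
                    * Real.sqrt (∑ i : Fin 3, HSq hh 2 (pd i (σ t)))) := by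
  obtain ⟨c, hc, hsob⟩ := sobolev hh hhh
  set K := 36 * μ ^ 2 + 36 * c * (2 * (1 + hh) ^ 2 + 2 * c) + 36 * c + 4 with hK
  have hKp : 0 < K := by positivity
  refine ⟨Real.sqrt K / d, by positivity, ?_⟩
  intro κ T hκ hT σ u β hσ hu hβ hN hBC hρ t ht
  have hnhds : Set.Ioo (0:ℝ) T ∈ 𝓝 t := Ioo_mem_nhds ht.1 ht.2
  have hdiv : ∀ x ∈ slab hh, ∑ i, pd i (dt (uc u i) t) x = 0 := by
    intro x hx
    have h1 : HasDerivAt (fun s => ∑ i, pd i (uc u i s) x) (∑ i, pd i (dt (uc u i) t) x) t :=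
      HasDerivAt.fun_sum fun i _ => pd_dt (hu i).1 t x i
    have h2 : (fun s => ∑ i, pd i (uc u i s) x) =ᶠ[𝓝 t] fun _ => 0 := by
      filter_upwards [hnhds] with s hs
      exact (hN s hs x hx).2.2
    exact h1.unique ((hasDerivAt_const t (0:ℝ)).congr_of_eventuallyEq h2)
  have hb : ∀ x ∈ bdry hh, dt (uc u 2) t x = 0 := by
    intro x hx
    have h2 : (fun s => uc u 2 s x) =ᶠ[𝓝 t] fun _ => 0 := by
      filter_upwards [hnhds] with s hs
      exact (hBC s hs x hx).1
    exact ((hasDerivAt_const t (0:ℝ)).congr_of_eventuallyEq h2).deriv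
  have main := main_est hh μ d c κ hhh hd hc hκ hsob (σ t) (β t) (fun j => uc u j t)
    (fun j => dt (uc u j) t)
    ⟨slice_smooth hσ.1 t, fun l => (hσ.2 t l).1⟩ ⟨slice_smooth hβ.1 t, fun l => (hβ.2 t l).1⟩
    (fun j => ⟨slice_smooth (hu j).1 t, fun l => ((hu j).2 t l).1⟩)
    (fun j => ⟨dt_smooth (hu j).1 t, fun l => ((hu j).2 t l).2⟩)
    hdiv hb (hρ t ht) (fun x hx j => (hN t ht x hx).2.1 j)
  set q := L2sq hh (laph (σ t)) + L2sq hh (pd 0 (pd 2 (σ t))) + L2sq hh (pd 1 (pd 2 (σ t))) with hq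
  have hqp : 0 ≤ q := add_nonneg (add_nonneg (L2sq_nonneg _ _) (L2sq_nonneg _ _)) (L2sq_nonneg _ _)
  have fs := final_scalar c hh μ κ⁻¹ κ (Hnorm hh 2 (σ t)) (VHnorm hh 1 (u t)) (VHnorm hh 2 (u t))
    (Real.sqrt (∑ i : Fin 3, HSq hh 1 (pd i (σ t)))) (Real.sqrt (∑ i : Fin 3, HSq hh 2 (pd i (σ t))))
    (Real.sqrt q) hc hhh hκ (by positivity) (Real.sqrt_nonneg _) (Real.sqrt_nonneg _)
    (Real.sqrt_nonneg _) (Real.sqrt_nonneg _) (Real.sqrt_nonneg _) (Real.sqrt_nonneg _)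
  have e1 : Hnorm hh 2 (σ t) ^ 2 = HSq hh 2 (σ t) := Real.sq_sqrt (HSq_nonneg _ _ _)
  have e2 : VHnorm hh 1 (u t) ^ 2 = ∑ j, HSq hh 1 (uc u j t) :=
    Real.sq_sqrt (Finset.sum_nonneg fun _ _ => HSq_nonneg _ _ _)
  have e3 : VHnorm hh 2 (u t) ^ 2 = ∑ j, HSq hh 2 (uc u j t) :=
    Real.sq_sqrt (Finset.sum_nonneg fun _ _ => HSq_nonneg _ _ _)
  have e4 := Real.sq_sqrt (Finset.sum_nonneg fun (i : Fin 3) (_ : i ∈ Finset.univ) =>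
    HSq_nonneg hh 1 (pd i (σ t)))
  have e5 := Real.sq_sqrt (Finset.sum_nonneg fun (i : Fin 3) (_ : i ∈ Finset.univ) =>
    HSq_nonneg hh 2 (pd i (σ t)))
  rw [e1, e2, e3, e4, e5, Real.sq_sqrt hqp, ← hK] at fs
  have tot := main.trans fs
  unfold utNorm
  simp only [HSq_zero]
  exact final_sqrt hKp hd (Y_nonneg hκ.le (inv_pos.2 hκ).le (Real.sqrt_nonneg _)
    (Real.sqrt_nonneg _) (Real.sqrt_nonneg _) (Real.sqrt_nonneg _) (Real.sqrt_nonneg _)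
    (Real.sqrt_nonneg _)) tot
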